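/- For every growing function φ with φ(n) < n for all n, there exists a sequence q₂(n) with q₂(n) ~ φ(n)·2^n such that D(n, q₂(n)) ≲ 2n as n → ∞. -/

import Mathlib

open Filter

namespace Rev

/-- A reversible gate `TOF(I; t)` on `N` lines: a control set `I` with `|I| ≤ 2`
and a target `t ∉ I`.  `|I| = 0, 1, 2` correspond to NOT, CNOT, C²NOT. -/
structure Gate (N : ℕ) where
  I : Finset (Fin N)
  t : Fin N
  card_le : I.card ≤ 2
  t_not_mem : t ∉ I

/-- The transformation computed by a gate: the target coordinate is XORed with the
conjunction of the control coordinates (the empty conjunction is `1`). -/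
def Gate.apply {N : ℕ} (g : Gate N) (x : Fin N → Bool) : Fin N → Bool :=
  fun j => if j = g.t then xor (x g.t) (decide (∀ i ∈ g.I, x i = true)) else x j

/-- A reversible circuit: a finite sequence (composition) of gates. -/
abbrev Circuit (N : ℕ) := List (Gate N)

/-- The transformation computed by a circuit (composition of the gate maps). -/
def Circuit.eval {N : ℕ} (S : Circuit N) (x : Fin N → Bool) : Fin N → Bool :=
  S.foldl (fun v g => g.apply v) x

/-- Gate complexity: the number of gates. -/
def Circuit.L {N : ℕ} (S : Circuit N) : ℕ := S.length

/-- The number of NOT and CNOT gates. -/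
def Circuit.LC {N : ℕ} (S : Circuit N) : ℕ := (S.filter fun g => g.I.card ≤ 1).length

/-- The number of C²NOT (Toffoli) gates. -/
def Circuit.LT {N : ℕ} (S : Circuit N) : ℕ := (S.filter fun g => g.I.card = 2).length

/-- The quantum weight, given weights `WC` for NOT/CNOT gates and `WT` for C²NOT gates. -/
noncomputable def Circuit.W {N : ℕ} (WC WT : ℝ) (S : Circuit N) : ℝ :=
  WC * S.LC + WT * S.LT

/-- A circuit has depth one if the sets `{t} ∪ I` of its gates are pairwise disjoint. -/
def DepthOne {N : ℕ} (S : Circuit N) : Prop :=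
  S.Pairwise fun g₁ g₂ => Disjoint (insert g₁.t g₁.I) (insert g₂.t g₂.I)

/-- The depth of a circuit: the minimal number of depth-one sub-circuits whose
concatenation is the circuit. -/
noncomputable def Circuit.D {N : ℕ} (S : Circuit N) : ℕ :=
  sInf {d | ∃ parts : List (Circuit N),
    parts.length = d ∧ parts.flatten = S ∧ ∀ p ∈ parts, DepthOne p}

/-- Padding an input vector with zero values on `q` additional inputs. -/
def pad {n q : ℕ} (x : Fin n → Bool) : Fin (n + q) → Bool :=
  fun i => if h : (i : ℕ) < n then x ⟨i, h⟩ else false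

/-- A circuit `S` with `n + q` inputs implements `f : 𝔹ⁿ → 𝔹ᵐ` with `q` additional
inputs: there is a permutation `π` of the output positions such that for every `x`,
applying `S` to `⟨x, 0, …, 0⟩` and permuting the coordinates by `π` yields a vector
whose first `m` coordinates equal `f x`. -/
def Implements {n q m : ℕ} (S : Circuit (n + q)) (f : (Fin n → Bool) → Fin m → Bool) :
    Prop :=
  m ≤ n + q ∧ ∃ π : Equiv.Perm (Fin (n + q)), ∀ x : Fin n → Bool, ∀ j : Fin m,
    ∀ hj : (j : ℕ) < n + q, Circuit.eval S (pad x) (π ⟨j, hj⟩) = f x j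

/-- `f ∈ F(n, q)`: `f : 𝔹ⁿ → 𝔹ⁿ` is implementable with `q` additional inputs. -/
def Implementable (n q : ℕ) (f : (Fin n → Bool) → Fin n → Bool) : Prop :=
  ∃ S : Circuit (n + q), Implements S f

/-- `L(f, q)`: minimal gate complexity of a circuit implementing `f` with `q`
additional inputs. -/
noncomputable def Lmin (n q : ℕ) (f : (Fin n → Bool) → Fin n → Bool) : ℕ :=
  sInf {l | ∃ S : Circuit (n + q), Implements S f ∧ S.L = l}

/-- The Shannon gate complexity function `L(n, q)`. -/
noncomputable def Lsh (n q : ℕ) : ℕ :=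
  sSup {l | ∃ f, Implementable n q f ∧ Lmin n q f = l}

/-- `D(f, q)`: minimal depth of a circuit implementing `f` with `q` additional inputs. -/
noncomputable def Dmin (n q : ℕ) (f : (Fin n → Bool) → Fin n → Bool) : ℕ :=
  sInf {d | ∃ S : Circuit (n + q), Implements S f ∧ S.D = d}

/-- The Shannon depth function `D(n, q)`. -/
noncomputable def Dsh (n q : ℕ) : ℕ :=
  sSup {d | ∃ f, Implementable n q f ∧ Dmin n q f = d}

/-- `W(f, q)`: minimal quantum weight of a circuit implementing `f` with `q`
additional inputs. -/
noncomputable def Wmin (WC WT : ℝ) (n q : ℕ) (f : (Fin n → Bool) → Fin n → Bool) : ℝ :=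
  sInf {w | ∃ S : Circuit (n + q), Implements S f ∧ Circuit.W WC WT S = w}

/-- The Shannon quantum weight function `W(n, q)`. -/
noncomputable def Wsh (WC WT : ℝ) (n q : ℕ) : ℝ :=
  sSup {w | ∃ f, Implementable n q f ∧ Wmin WC WT n q f = w}

/-- `a ~ b`: `a n / b n → 1`. -/
def AsympEquiv (a b : ℕ → ℝ) : Prop :=
  Tendsto (fun n => a n / b n) atTop (nhds 1)

/-- `a ≲ b`: `limsup (a n / b n) ≤ 1`. -/
def AsympLE (a b : ℕ → ℝ) : Prop :=
  Filter.limsup (fun n => a n / b n) atTop ≤ 1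

/-- A growing function: nondecreasing and tending to `+∞`. -/
def Growing (φ : ℕ → ℝ) : Prop :=
  Monotone φ ∧ Tendsto φ atTop atTop

/-- `2 ^ (n - ⌈n / φ(n)⌉)` as a real number. -/
noncomputable def pow2e (φ : ℕ → ℝ) (n : ℕ) : ℝ :=
  (2 : ℝ) ^ ((n : ℤ) - ⌈(n : ℝ) / φ n⌉)

end Rev

namespace Rev

section Aux
variable {X : Type}

inductive Step : Multiset (X → Bool) → Multiset (X → Bool) → Prop
  | refl (A : Multiset (X → Bool)) : Step A A
  | gate (C : Multiset (X → Bool)) (hC : C.card ≤ 2) (g : X → Bool) :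
      Step (g ::ₘ C) ((g + C.prod) ::ₘ C)
  | add {A A' B B' : Multiset (X → Bool)} : Step A A' → Step B B' → Step (A + B) (A' + B')

def Reach : ℕ → Multiset (X → Bool) → Multiset (X → Bool) → Prop
  | 0, A, B => A = B
  | d + 1, A, B => ∃ M, Step A M ∧ Reach d M B

lemma split_map {N : ℕ} (v : Fin N → X → Bool) (A B : Multiset (X → Bool)) :
    ∀ T : Finset (Fin N), T.val.map v = A + B →
      ∃ T₁ T₂ : Finset (Fin N), Disjoint T₁ T₂ ∧ T₁ ∪ T₂ = T ∧ T₁.val.map v = A ∧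
        T₂.val.map v = B := by
  induction A using Multiset.induction_on with
  | empty => intro T h; exact ⟨∅, T, by simp, by simp, by simp, by simpa using h⟩
  | cons a A ih =>
    intro T h
    rw [Multiset.cons_add] at h
    obtain ⟨t, ht, hta, hT⟩ := (Multiset.map_eq_cons v T.val (A + B) a).2 h
    obtain ⟨T₁, T₂, hd, hu, h1, h2⟩ := ih (T.erase t) hT
    have htn : t ∉ T₁ ∪ T₂ := by rw [hu]; simp
    rw [Finset.mem_union, not_or] at htn
    refine ⟨insert t T₁, T₂, ?_, ?_, ?_, h2⟩
    · rw [Finset.disjoint_insert_left]; exact ⟨htn.2, hd⟩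
    · rw [Finset.insert_union, hu, Finset.insert_erase ht]
    · rw [Finset.insert_val_of_notMem htn.1, Multiset.map_cons, hta, h1]

lemma eval_append {N : ℕ} (p q : Circuit N) (y : Fin N → Bool) :
    Circuit.eval (p ++ q) y = Circuit.eval q (Circuit.eval p y) := by
  simp [Circuit.eval]

lemma eval_off {N : ℕ} (T : Finset (Fin N)) (p : Circuit N) :
    ∀ (y : Fin N → Bool), (∀ g ∈ p, insert g.t g.I ⊆ T) → ∀ i, i ∉ T →
      Circuit.eval p y i = y i := by
  induction p with
  | nil => intro y _ i _; rfl
  | cons g p ih =>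
    intro y hp i hi
    have h1 := ih (g.apply y) (fun g' hg' => hp g' (List.mem_cons_of_mem _ hg')) i hi
    have h2 : Circuit.eval (g :: p) y i = Circuit.eval p (g.apply y) i := rfl
    rw [h2, h1]
    have : i ≠ g.t := by
      rintro rfl
      exact hi (hp g (by simp) (by simp))
    simp [Gate.apply, this]

lemma eval_on {N : ℕ} (T : Finset (Fin N)) (p : Circuit N) :
    ∀ (y y' : Fin N → Bool), (∀ g ∈ p, insert g.t g.I ⊆ T) → (∀ i ∈ T, y i = y' i) →
      ∀ i ∈ T, Circuit.eval p y i = Circuit.eval p y' i := by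
  induction p with
  | nil => intro y y' _ h i hi; exact h i hi
  | cons g p ih =>
    intro y y' hp h i hi
    refine ih (g.apply y) (g.apply y') (fun g' hg' => hp g' (List.mem_cons_of_mem _ hg')) ?_ i hi
    intro j hj
    have hg := hp g (by simp)
    have ht : y g.t = y' g.t := h _ (hg (by simp))
    have hI : (∀ i ∈ g.I, y i = true) ↔ (∀ i ∈ g.I, y' i = true) := by
      constructor
      · intro hh i hi; rw [← h i (hg (by simp [hi]))]; exact hh i hi
      · intro hh i hi; rw [h i (hg (by simp [hi]))]; exact hh i hi
    simp only [Gate.apply, ht, hI, h j hj]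

lemma prod_eq_decide {N : ℕ} (I : Finset (Fin N)) (v : Fin N → X → Bool) (x : X) :
    (I.val.map v).prod x = decide (∀ i ∈ I, v i x = true) := by
  have h0 : (I.val.map v).prod = ∏ i ∈ I, v i := rfl
  rw [h0, Finset.prod_apply]
  induction I using Finset.induction_on with
  | empty => simp [Bool.one_eq_true]
  | insert a s ha ih =>
    rw [Finset.prod_insert ha, ih, Bool.mul_eq_and, Bool.eq_iff_iff]
    simp
    rfl

lemma step_realize {N : ℕ} {A A' : Multiset (X → Bool)} (h : Step A A') :
    ∀ (T : Finset (Fin N)) (v : Fin N → X → Bool), T.val.map v = A →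
      ∃ p : Circuit N, DepthOne p ∧ (∀ g ∈ p, insert g.t g.I ⊆ T) ∧
        T.val.map (fun i x => Circuit.eval p (fun j => v j x) i) = A' := by
  induction h with
  | refl A =>
    intro T v h
    exact ⟨[], List.Pairwise.nil, by simp, h⟩
  | gate C hC g =>
    intro T v h
    obtain ⟨t, ht, hta, hT⟩ := (Multiset.map_eq_cons v T.val C g).2 h
    have ht' : t ∈ T := ht
    have hT' : (T.erase t).val.map v = C := hT
    have hc : (T.erase t).card ≤ 2 := by
      rw [← hT', Multiset.card_map] at hC; exact hC
    clear h hT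
    subst hT'
    refine ⟨[⟨T.erase t, t, hc, by simp⟩], List.pairwise_singleton _ _, ?_, ?_⟩
    · simp [Finset.insert_erase ht']
    · have hTT : T = insert t (T.erase t) := (Finset.insert_erase ht').symm
      have hv : T.val = t ::ₘ (T.erase t).val := by
        conv_lhs => rw [hTT]
        exact Finset.insert_val_of_notMem (by simp)
      rw [hv, Multiset.map_cons]
      congr 1
      · funext x
        simp only [Circuit.eval, List.foldl, Gate.apply, if_true]
        rw [Pi.add_apply, prod_eq_decide, hta]; rfl
      · apply Multiset.map_congr rfl
        intro i hi
        have : i ≠ t := by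
          have hi' : i ∈ T.erase t := hi
          exact (Finset.mem_erase.1 hi').1
        funext x
        simp [Circuit.eval, Gate.apply, this]
  | add h1 h2 ih1 ih2 =>
    intro T v h
    obtain ⟨T₁, T₂, hd, hu, hA, hB⟩ := split_map v _ _ T h
    obtain ⟨p, hp1, hp2, hp3⟩ := ih1 T₁ v hA
    obtain ⟨q, hq1, hq2, hq3⟩ := ih2 T₂ v hB
    refine ⟨p ++ q, ?_, ?_, ?_⟩
    · refine List.pairwise_append.2 ⟨hp1, hq1, fun a ha b hb => ?_⟩
      exact Disjoint.mono (hp2 a ha) (hq2 b hb) hd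
    · intro g hg
      rcases List.mem_append.1 hg with hg | hg
      · exact (hp2 g hg).trans (hu ▸ Finset.subset_union_left)
      · exact (hq2 g hg).trans (hu ▸ Finset.subset_union_right)
    · have hv : T.val = T₁.val + T₂.val := by
        rw [← hu, ← Finset.disjUnion_eq_union _ _ hd]; rfl
      rw [hv, Multiset.map_add, ← hp3, ← hq3]
      congr 1
      · apply Multiset.map_congr rfl
        intro i hi
        funext x
        rw [eval_append]
        exact eval_off T₂ q _ hq2 i (Finset.disjoint_left.1 hd hi)
      · apply Multiset.map_congr rfl
        intro i hi
        funext x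
        rw [eval_append]
        refine eval_on T₂ q _ _ hq2 ?_ i hi
        intro j hj
        exact eval_off T₁ p _ hp2 j (Finset.disjoint_right.1 hd hj)

lemma reach_realize {N : ℕ} (d : ℕ) : ∀ (A B : Multiset (X → Bool)), Reach d A B →
    ∀ (v : Fin N → X → Bool), Finset.univ.val.map v = A →
      ∃ parts : List (Circuit N), parts.length = d ∧ (∀ p ∈ parts, DepthOne p) ∧
        Finset.univ.val.map (fun i x => Circuit.eval parts.flatten (fun j => v j x) i) = B := by
  induction d with
  | zero =>
    intro A B h v hv
    have h : A = B := h
    exact ⟨[], rfl, by simp, by rw [← h, ← hv]; rfl⟩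
  | succ d ih =>
    rintro A B ⟨M, hs, hr⟩ v hv
    obtain ⟨p, hp1, -, hp3⟩ := step_realize hs Finset.univ v hv
    obtain ⟨parts, hl, hd, he⟩ := ih M B hr _ hp3
    refine ⟨p :: parts, by simp [hl], ?_, ?_⟩
    · intro r hr
      rcases List.mem_cons.1 hr with rfl | hr
      · exact hp1
      · exact hd r hr
    · rw [← he]
      simp only [List.flatten_cons, eval_append]

lemma sum_singleton_eq {ι α : Type} [Fintype ι] (g : ι → α) :
    (∑ i, {g i} : Multiset α) = Finset.univ.val.map g := by
  have h := congrArg (Multiset.map g) (Finset.sum_multiset_singleton (Finset.univ : Finset ι))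
  rw [← h, ← Multiset.coe_mapAddMonoidHom, map_sum]
  simp

lemma exists_perm_of_map_eq {ι α : Type} [Fintype ι] {f g : ι → α}
    (h : Finset.univ.val.map f = Finset.univ.val.map g) :
    ∃ σ : Equiv.Perm ι, f = g ∘ σ := by
  classical
  have e : ∀ c, Nonempty ({a // f a = c} ≃ {b // g b = c}) := by
    intro c
    rw [← Fintype.card_eq]
    have := congrArg (Multiset.count c) h
    rw [Multiset.count_map, Multiset.count_map] at this
    rw [Fintype.card_subtype, Fintype.card_subtype]
    simp only [Finset.card, Finset.filter_val]
    simpa only [eq_comm] using this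
  refine ⟨Equiv.ofFiberEquiv (fun c => (e c).some), ?_⟩
  funext i
  exact (Equiv.ofFiberEquiv_map _ i).symm

/-- Depth bound from reachability. -/
lemma dmin_le {n q d : ℕ} (f : (Fin n → Bool) → Fin n → Bool)
    (G : Multiset ((Fin n → Bool) → Bool))
    (h : Reach d ((∑ v : Fin n, {fun x : Fin n → Bool => x v}) + Multiset.replicate q 0)
      ((∑ i : Fin n, {fun x => f x i}) + G)) : Dmin n q f ≤ d := by
  have hv : (Finset.univ : Finset (Fin (n + q))).val.map
      (fun i (x : Fin n → Bool) => pad (q := q) x i) =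
      (∑ v : Fin n, {fun x : Fin n → Bool => x v}) + Multiset.replicate q 0 := by
    have : (Finset.univ : Finset (Fin (n + q))).val.map
      (fun i (x : Fin n → Bool) => pad (q := q) x i) =
      ∑ i : Fin (n + q), {fun (x : Fin n → Bool) => pad (q := q) x i} := by
      exact (sum_singleton_eq _).symm
    rw [this, Fin.sum_univ_add]
    congr 1
    · apply Finset.sum_congr rfl
      intro i _
      simp [pad]
    · simp [pad, Finset.sum_const, Multiset.nsmul_singleton]
      rfl
  obtain ⟨parts, hl, hd, he⟩ := reach_realize d _ _ h _ hv
  have hD : Circuit.D parts.flatten ≤ d := Nat.sInf_le ⟨parts, hl, rfl, hd⟩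
  have key : Implements parts.flatten f := by
    refine ⟨Nat.le_add_right n q, ?_⟩
    rw [sum_singleton_eq] at he
    have hcard : G.toList.length = q := by
      have := congrArg Multiset.card he
      simp at this
      simpa using this.symm
    obtain ⟨g, hg⟩ : ∃ g : Fin q → ((Fin n → Bool) → Bool), Finset.univ.val.map g = G := by
      subst hcard
      refine ⟨G.toList.get, ?_⟩
      rw [Fin.univ_val_map, List.ofFn_get, Multiset.coe_toList]
    have hap : (Finset.univ : Finset (Fin n)).val.map (fun i x => f x i) + G =
        (Finset.univ : Finset (Fin (n + q))).val.map
          (Fin.append (fun i x => f x i) g) := by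
      rw [← hg, ← sum_singleton_eq, ← sum_singleton_eq, ← sum_singleton_eq, Fin.sum_univ_add]
      simp
    rw [hap] at he
    obtain ⟨σ, hσ⟩ := exists_perm_of_map_eq he
    refine ⟨σ.symm, fun x j hj => ?_⟩
    have := congrFun (congrFun hσ (σ.symm ⟨j, hj⟩)) x
    simp only [Function.comp, Equiv.apply_symm_apply] at this
    rw [this]
    have h3 : (⟨j, hj⟩ : Fin (n + q)) = Fin.castAdd q j := rfl
    rw [h3, Fin.append_left]
  exact le_trans (Nat.sInf_le ⟨_, key, rfl⟩) hD

end Aux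
end Rev
namespace Rev

section Comp
variable {X : Type}

lemma Reach.add : ∀ (d : ℕ) {A A' B B' : Multiset (X → Bool)}, Reach d A A' → Reach d B B' →
    Reach d (A + B) (A' + B')
  | 0, _, _, _, _, h, h' => by
    simp only [Reach] at *; rw [h, h']
  | d + 1, _, _, _, _, ⟨M, h, hr⟩, ⟨M', h', hr'⟩ =>
    ⟨M + M', Step.add h h', Reach.add d hr hr'⟩

lemma Reach.refl : ∀ (d : ℕ) (A : Multiset (X → Bool)), Reach d A A
  | 0, _ => rfl
  | d + 1, A => ⟨A, Step.refl A, Reach.refl d A⟩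

lemma Reach.trans : ∀ (d e : ℕ) {A B C : Multiset (X → Bool)}, Reach d A B → Reach e B C →
    Reach (d + e) A C
  | 0, e, _, _, _, h, h' => by
    simp only [Reach] at h; subst h; simpa using h'
  | d + 1, e, _, _, _, ⟨M, h, hr⟩, h' => by
    rw [Nat.add_right_comm]
    exact ⟨M, h, Reach.trans d e hr h'⟩

lemma Reach.mono {d e : ℕ} (hde : d ≤ e) {A B : Multiset (X → Bool)} (h : Reach d A B) :
    Reach e A B := by
  obtain ⟨c, rfl⟩ := Nat.exists_eq_add_of_le hde
  exact Reach.trans d c h (Reach.refl c B)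

/-- From `A` and `z` zero lines one can get `B` (and garbage) in depth `d`. -/
def Comp (d : ℕ) (A : Multiset (X → Bool)) (z : ℕ) (B : Multiset (X → Bool)) : Prop :=
  ∃ G, Reach d (A + Multiset.replicate z 0) (B + G)

lemma Comp.mono {d e z w : ℕ} (hd : d ≤ e) (hz : z ≤ w) {A B : Multiset (X → Bool)}
    (h : Comp d A z B) : Comp e A w B := by
  obtain ⟨G, hG⟩ := h
  obtain ⟨c, rfl⟩ := Nat.exists_eq_add_of_le hz
  refine ⟨G + Multiset.replicate c 0, ?_⟩
  rw [Multiset.replicate_add, ← add_assoc, ← add_assoc]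
  exact (Reach.add d hG (Reach.refl d _)).mono hd

lemma Comp.refl (A : Multiset (X → Bool)) : Comp 0 A 0 A := ⟨0, by simp [Reach]⟩

lemma Comp.par {d z w : ℕ} {A B A' B' : Multiset (X → Bool)} (h : Comp d A z B)
    (h' : Comp d A' w B') : Comp d (A + A') (z + w) (B + B') := by
  obtain ⟨G, hG⟩ := h
  obtain ⟨G', hG'⟩ := h'
  refine ⟨G + G', ?_⟩
  rw [Multiset.replicate_add, add_add_add_comm, add_add_add_comm B]
  exact Reach.add d hG hG'

lemma Comp.seq {d e z w : ℕ} {A B C : Multiset (X → Bool)} (h : Comp d A z B)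
    (h' : Comp e B w C) : Comp (d + e) A (z + w) C := by
  obtain ⟨G, hG⟩ := h
  obtain ⟨G', hG'⟩ := h'
  refine ⟨G' + G, ?_⟩
  refine Reach.trans d e (B := B + Multiset.replicate w 0 + G) ?_ ?_
  · rw [Multiset.replicate_add, ← add_assoc, add_right_comm B]
    exact Reach.add d hG (Reach.refl d _)
  · rw [← add_assoc]
    exact Reach.add e hG' (Reach.refl e _)

lemma Comp.weaken {d z : ℕ} {A B C : Multiset (X → Bool)} (h : Comp d A z (B + C)) :
    Comp d A z B := by
  obtain ⟨G, hG⟩ := h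
  exact ⟨C + G, by rwa [← add_assoc]⟩

lemma Comp.sum {ι : Type} {d : ℕ} (s : Finset ι) (z : ι → ℕ) (A B : ι → Multiset (X → Bool))
    (h : ∀ i ∈ s, Comp d (A i) (z i) (B i)) :
    Comp d (∑ i ∈ s, A i) (∑ i ∈ s, z i) (∑ i ∈ s, B i) := by
  classical
  induction s using Finset.induction_on with
  | empty => simpa using (Comp.refl (0 : Multiset (X → Bool))).mono (Nat.zero_le d) le_rfl
  | insert a s ha ih =>
    rw [Finset.sum_insert ha, Finset.sum_insert ha, Finset.sum_insert ha]
    exact (h a (by simp)).par (ih fun i hi => h i (by simp [hi]))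

lemma Comp.nsmul {d z : ℕ} {A B : Multiset (X → Bool)} (h : Comp d A z B) (c : ℕ) :
    Comp d (c • A) (c * z) (c • B) := by
  have := Comp.sum (Finset.range c) (fun _ => z) (fun _ => A) (fun _ => B) (fun _ _ => h)
  simpa using this

lemma comp_copy (f : X → Bool) : Comp 1 {f} 1 (Multiset.replicate 2 f) := by
  refine ⟨0, _, ?_, rfl⟩
  have := Step.gate {f} (by simp) 0
  have e : ({f} + Multiset.replicate 1 0 : Multiset (X → Bool)) = 0 ::ₘ {f} := by
    rw [Multiset.replicate_one, add_comm]; rfl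
  rw [e]
  simpa [Multiset.replicate_succ] using this

lemma comp_not (f : X → Bool) : Comp 1 {f} 0 {f + 1} := by
  refine ⟨0, {f + 1}, ?_, by simp [Reach]⟩
  have := Step.gate 0 (by simp) f
  simpa using this

lemma comp_xor (f g : X → Bool) : Comp 1 {f, g} 0 {f + g} := by
  refine ⟨{g}, _, ?_, rfl⟩
  have := Step.gate {g} (by simp) f
  simpa using this

lemma comp_and (f g : X → Bool) : Comp 1 {f, g} 1 {f * g} := by
  refine ⟨{f, g}, _, ?_, rfl⟩
  have := Step.gate {f, g} (by simp) 0
  have e : ({f, g} + Multiset.replicate 1 0 : Multiset (X → Bool)) = 0 ::ₘ {f, g} := by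
    rw [Multiset.replicate_one, add_comm]; rfl
  have e2 : ({f * g} + {f, g} : Multiset (X → Bool)) = (f * g) ::ₘ {f, g} := rfl
  rw [e, e2]
  simpa using this

lemma comp_fan (f : X → Bool) : ∀ (d c : ℕ), c ≤ 2 ^ d →
    Comp d {f} c (Multiset.replicate c f)
  | 0, c, h => by
    have h : c ≤ 1 := by simpa using h
    interval_cases c
    · exact ⟨{f}, by simp [Reach]⟩
    · exact ⟨{0}, by simp [Reach]⟩
  | d + 1, c, h => by
    have h1 := comp_fan f d ((c + 1) / 2) (by rw [pow_succ] at h; omega)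
    have h2 := (comp_copy f).nsmul (c / 2)
    have h3 := ((Comp.refl (Multiset.replicate ((c + 1) / 2 - c / 2) f)).mono
      (Nat.zero_le 1) le_rfl).par h2
    rw [← Multiset.nsmul_singleton, ← Multiset.nsmul_singleton,
      ← add_nsmul, smul_smul, ← add_nsmul] at h3
    rw [← Multiset.nsmul_singleton] at h1 ⊢
    have e1 : (c + 1) / 2 - c / 2 + c / 2 = (c + 1) / 2 := by omega
    have e2 : (c + 1) / 2 - c / 2 + c / 2 * 2 = c := by omega
    rw [e1, e2] at h3
    exact (h1.seq h3).mono le_rfl (by omega)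

lemma exists_split (A : Multiset (X → Bool)) (j : ℕ) (h : j ≤ A.card) :
    ∃ B C, A = B + C ∧ B.card = j := by
  induction j with
  | zero => exact ⟨0, A, by simp, rfl⟩
  | succ j ih =>
    obtain ⟨B, C, hA, hB⟩ := ih (by omega)
    have hC : 0 < C.card := by
      have := congrArg Multiset.card hA
      rw [Multiset.card_add] at this; omega
    obtain ⟨c, hc⟩ := Multiset.card_pos_iff_exists_mem.1 hC
    obtain ⟨C', rfl⟩ := Multiset.exists_cons_of_mem hc
    exact ⟨c ::ₘ B, C', by rw [hA, Multiset.cons_add, Multiset.add_cons], by simp [hB]⟩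

lemma comp_xor_tree : ∀ (d : ℕ) (A : Multiset (X → Bool)), 0 < A.card → A.card ≤ 2 ^ d →
    Comp d A 0 {A.sum}
  | 0, A, h0, h => by
    have h : A.card ≤ 1 := by simpa using h
    obtain ⟨a, rfl⟩ := Multiset.card_eq_one.1 (le_antisymm h h0)
    simpa using Comp.refl {a}
  | d + 1, A, h0, h => by
    by_cases hA : A.card ≤ 2 ^ d
    · exact (comp_xor_tree d A h0 hA).mono (Nat.le_succ d) le_rfl
    · obtain ⟨B, C, hBC, hB⟩ := exists_split A (2 ^ d) (by omega)
      have hc := congrArg Multiset.card hBC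
      rw [Multiset.card_add] at hc
      rw [pow_succ] at h
      have h1 := comp_xor_tree d B (by rw [hB]; positivity) hB.le
      have h2 := comp_xor_tree d C (by omega) (by omega)
      have h3 := (h1.par h2).seq (comp_xor B.sum C.sum)
      rw [hBC, Multiset.sum_add]
      simpa using h3

lemma comp_xor_tree' (d : ℕ) (A : Multiset (X → Bool)) (h : A.card ≤ 2 ^ d) :
    Comp d A 1 {A.sum} := by
  rcases Nat.eq_zero_or_pos A.card with h0 | h0
  · rw [Multiset.card_eq_zero] at h0
    subst h0
    have : Comp 0 (0 : Multiset (X → Bool)) 1 {0} := ⟨0, by simp [Reach]⟩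
    simpa using this.mono (Nat.zero_le d) le_rfl
  · exact (comp_xor_tree d A h0 h).mono le_rfl (Nat.zero_le 1)

lemma comp_and_tree : ∀ (d : ℕ) (A : Multiset (X → Bool)), 0 < A.card → A.card ≤ 2 ^ d →
    Comp d A (A.card - 1) {A.prod}
  | 0, A, h0, h => by
    have h : A.card ≤ 1 := by simpa using h
    obtain ⟨a, rfl⟩ := Multiset.card_eq_one.1 (le_antisymm h h0)
    simpa using Comp.refl {a}
  | d + 1, A, h0, h => by
    by_cases hA : A.card ≤ 2 ^ d
    · exact (comp_and_tree d A h0 hA).mono (Nat.le_succ d) le_rfl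
    · obtain ⟨B, C, hBC, hB⟩ := exists_split A (2 ^ d) (by omega)
      have hc := congrArg Multiset.card hBC
      rw [Multiset.card_add] at hc
      rw [pow_succ] at h
      have hB0 : 0 < B.card := by rw [hB]; positivity
      have h1 := comp_and_tree d B hB0 hB.le
      have h2 := comp_and_tree d C (by omega) (by omega)
      have h3 := (h1.par h2).seq (comp_and B.prod C.prod)
      rw [hBC, Multiset.prod_add]
      refine h3.mono le_rfl ?_
      rw [Multiset.card_add]
      omega

/-- Distributing copies. -/
lemma comp_dist {τ L : Type} [Fintype τ] [DecidableEq τ] [Fintype L] (g : τ → X → Bool) (t : L → τ)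
    (d : ℕ) (h : ∀ c, (Finset.univ.filter fun l => t l = c).card ≤ 2 ^ d) :
    Comp d (∑ c, {g c}) (Fintype.card L) (∑ l, {g (t l)}) := by
  have h1 := Comp.sum Finset.univ _ _ _ fun c (_ : c ∈ Finset.univ) => comp_fan (g c) d _ (h c)
  rw [← Finset.card_eq_sum_card_fiberwise (fun _ _ => by simp)] at h1
  rw [← Finset.sum_fiberwise Finset.univ t fun l => ({g (t l)} : Multiset (X → Bool))]
  rw [Finset.card_univ] at h1
  convert h1 using 2 with c
  rw [Finset.sum_congr rfl (g := fun _ => ({g c} : Multiset (X → Bool)))]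
  · simp [Multiset.nsmul_singleton]
  · intro l hl
    rw [(Finset.mem_filter.1 hl).2]

lemma card_fiber_snd {α β : Type} [Fintype α] [Fintype β] [DecidableEq β] (c : β) :
    (Finset.univ.filter fun l : α × β => l.2 = c).card = Fintype.card α := by
  rw [← Fintype.card_subtype]
  exact Fintype.card_congr
    ⟨fun l => l.1.1, fun a => ⟨(a, c), rfl⟩, by rintro ⟨⟨a, b⟩, rfl⟩; rfl, fun a => rfl⟩

/-- minterm -/
def mt {M : Type} [Fintype M] (y : M → X → Bool) (a : M → Bool) : X → Bool :=
  ∏ v, if a v then y v else y v + 1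

lemma mt_apply {M : Type} [Fintype M] (y : M → X → Bool) (a : M → Bool) (x : X) :
    mt y a x = if (fun v => y v x) = a then 1 else 0 := by
  rw [mt, Finset.prod_apply]
  split_ifs with h
  · apply Finset.prod_eq_one
    intro v _
    have := congrFun h v
    rw [← this]
    by_cases hv : y v x = true <;> simp [hv, Bool.one_eq_true, Bool.add_eq_xor]
  · obtain ⟨v, hv⟩ := Function.ne_iff.1 h
    apply Finset.prod_eq_zero (Finset.mem_univ v)
    cases hv1 : y v x <;> cases hv2 : a v <;>
      simp_all [Bool.one_eq_true, Bool.add_eq_xor, Bool.zero_eq_false]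

lemma comp_mt {M : Type} [Fintype M] [DecidableEq M] [Nonempty M] (y : M → X → Bool) (e : ℕ)
    (he : Fintype.card M ≤ 2 ^ e) :
    Comp (Fintype.card M + 1 + e) (∑ v, {y v}) (2 * (Fintype.card M * 2 ^ Fintype.card M))
      (∑ a, {mt y a}) := by
  have h1 := comp_dist (L := (M → Bool) × M) y (fun p => p.2) (Fintype.card M) (by
    intro c
    rw [card_fiber_snd]
    simp)
  have h2 : Comp 1 (∑ l : (M → Bool) × M, {y l.2}) 0
      (∑ l : (M → Bool) × M, {if l.1 l.2 then y l.2 else y l.2 + 1}) := by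
    have := Comp.sum (d := 1) (Finset.univ : Finset ((M → Bool) × M)) (fun _ => 0)
      (fun l => {y l.2})
      (fun l => {if l.1 l.2 then y l.2 else y l.2 + 1}) (by
        intro l _
        split_ifs
        · exact (Comp.refl _).mono (Nat.zero_le _) le_rfl
        · exact comp_not _)
    simpa using this
  have h3 : Comp e (∑ l : (M → Bool) × M, {if l.1 l.2 then y l.2 else y l.2 + 1})
      (Fintype.card M * 2 ^ Fintype.card M) (∑ a, {mt y a}) := by
    rw [Fintype.sum_prod_type]
    have := Comp.sum (d := e) (Finset.univ : Finset (M → Bool)) (fun _ => Fintype.card M)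
      (fun a => ∑ v, {if a v then y v else y v + 1}) (fun a => {mt y a}) (by
        intro a _
        rw [sum_singleton_eq]
        refine (comp_and_tree e _ ?_ ?_).mono le_rfl ?_
        · simpa using Fintype.card_pos
        · simpa using he
        · simp)
    refine this.mono le_rfl ?_
    simp [mul_comm]
  refine ((h1.seq h2).seq h3).mono le_rfl ?_
  simp
  ring_nf
  rfl

end Comp
end Rev
namespace Rev

section Main
variable {X : Type}

lemma comp_brute {K : Type} [Fintype K] [DecidableEq K] [Nonempty K] (y : K → X → Bool) (e : ℕ)
    (he : Fintype.card K ≤ 2 ^ e) :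
    Comp (Fintype.card K + 1 + e + 2 ^ Fintype.card K + Fintype.card K) (∑ v, {y v})
      (2 * (Fintype.card K * 2 ^ Fintype.card K)
        + 2 ^ 2 ^ Fintype.card K * 2 ^ Fintype.card K + 2 ^ 2 ^ Fintype.card K)
      (∑ h : (K → Bool) → Bool, {fun x => h (fun v => y v x)}) := by
  have h1 := comp_mt y e he
  have h2 := comp_dist (L := ((K → Bool) → Bool) × (K → Bool)) (mt y) (fun p => p.2)
    (2 ^ Fintype.card K) (by
      intro c
      rw [card_fiber_snd]
      simp)
  have h3 : Comp (Fintype.card K) (∑ l : ((K → Bool) → Bool) × (K → Bool), {mt y l.2})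
      (2 ^ 2 ^ Fintype.card K) (∑ h : (K → Bool) → Bool, {fun x => h (fun v => y v x)}) := by
    rw [Fintype.sum_prod_type]
    have := Comp.sum (d := Fintype.card K) (Finset.univ : Finset ((K → Bool) → Bool)) (fun _ => 1)
      (fun h => ∑ a, {mt y a}) (fun h => {fun x => h (fun v => y v x)}) (by
        intro h _
        rw [sum_singleton_eq]
        have hs : (Finset.univ : Finset (K → Bool)).val =
            (Finset.univ.filter fun a => h a = true).val +
            (Finset.univ.filter fun a => ¬ h a = true).val := by
          rw [Finset.filter_val, Finset.filter_val, Multiset.filter_add_not]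
        rw [hs, Multiset.map_add]
        have c1 := comp_xor_tree' (Fintype.card K)
          ((Finset.univ.filter fun a => h a = true).val.map (mt y)) (by
            rw [Multiset.card_map]
            refine (Finset.card_filter_le _ _).trans ?_
            simp)
        have c2 := (Comp.refl ((Finset.univ.filter fun a => ¬ h a = true).val.map (mt y))).mono
          (Nat.zero_le (Fintype.card K)) le_rfl
        have c3 := (c1.par c2).weaken
        have hf : (fun x => h (fun v => y v x)) =
            ((Finset.univ.filter fun a => h a = true).val.map (mt y)).sum := by
          have e0 : ((Finset.univ.filter fun a => h a = true).val.map (mt y)).sum =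
            ∑ a ∈ Finset.univ.filter (fun a => h a = true), mt y a := rfl
          rw [e0]
          funext x
          rw [Finset.sum_apply]
          simp only [mt_apply]
          rw [Finset.sum_ite_eq]
          simp only [Finset.mem_filter, Finset.mem_univ, true_and]
          cases h (fun v => y v x) <;> rfl
        rw [hf]
        exact c3)
    refine this.mono le_rfl ?_
    simp
  refine ((h1.seq h2).seq h3).mono le_rfl ?_
  simp

lemma comp_main {K M : Type} [Fintype K] [DecidableEq K] [Nonempty K]
    [Fintype M] [DecidableEq M] [Nonempty M] (n e : ℕ) (y : K → X → Bool) (w : M → X → Bool)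
    (hK : Fintype.card K ≤ 2 ^ e) (hM : Fintype.card M ≤ 2 ^ e) (hn : n ≤ 2 ^ e)
    (f : (K → Bool) → (M → Bool) → Fin n → Bool) :
    Comp (2 * Fintype.card M + 2 * Fintype.card K + 2 ^ Fintype.card K + 2 * e + 2)
      ((∑ v, {y v}) + ∑ v, {w v})
      (2 * (Fintype.card K * 2 ^ Fintype.card K)
        + 2 ^ 2 ^ Fintype.card K * 2 ^ Fintype.card K + 2 ^ 2 ^ Fintype.card K
        + 2 * (Fintype.card M * 2 ^ Fintype.card M) + 3 * (n * 2 ^ Fintype.card M) + n)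
      (∑ i, {fun x => f (fun v => y v x) (fun v => w v x) i}) := by
  have a1 := comp_brute y e hK
  have a2 := comp_dist (L := Fin n × (M → Bool))
    (fun (h : (K → Bool) → Bool) x => h (fun v => y v x)) (fun p b => f b p.2 p.1)
    (Fintype.card M + e) (by
      intro c
      refine (Finset.card_filter_le _ _).trans ?_
      simp only [Finset.card_univ, Fintype.card_prod, Fintype.card_fin, Fintype.card_fun,
        Fintype.card_bool, pow_add]
      rw [mul_comm]
      exact Nat.mul_le_mul_left _ hn)
  have a3 := a1.seq a2
  have b1 := comp_mt w e hM
  have b2 := comp_dist (L := Fin n × (M → Bool)) (mt w) (fun p => p.2) e (by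
      intro c
      rw [card_fiber_snd]
      simpa using hn)
  have b3 := b1.seq b2
  have c1 := (a3.mono (le_max_left _ _) le_rfl).par (b3.mono (le_max_right _ _) le_rfl)
  rw [← Finset.sum_add_distrib] at c1
  have c2 := Comp.sum (d := 1) (Finset.univ : Finset (Fin n × (M → Bool))) (fun _ => 1)
    (fun p => {fun x => f (fun v => y v x) p.2 p.1} + {mt w p.2})
    (fun p => {(fun x => f (fun v => y v x) p.2 p.1) * mt w p.2})
    (fun p _ => comp_and _ _)
  have c3 := c1.seq c2
  rw [Fintype.sum_prod_type (f := fun p : Fin n × (M → Bool) =>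
    ({(fun x => f (fun v => y v x) p.2 p.1) * mt w p.2} : Multiset (X → Bool)))] at c3
  have c4 := Comp.sum (d := Fintype.card M) (Finset.univ : Finset (Fin n)) (fun _ => 1)
    (fun i => ∑ a, {(fun x => f (fun v => y v x) a i) * mt w a})
    (fun i => {fun x => f (fun v => y v x) (fun v => w v x) i}) (by
      intro i _
      rw [sum_singleton_eq]
      have := comp_xor_tree' (Fintype.card M) ((Finset.univ : Finset (M → Bool)).val.map
        fun a => (fun x => f (fun v => y v x) a i) * mt w a) (by simp)
      convert this using 2
      have e0 : ((Finset.univ : Finset (M → Bool)).val.map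
        fun a => (fun x => f (fun v => y v x) a i) * mt w a).sum =
          ∑ a, (fun x => f (fun v => y v x) a i) * mt w a := rfl
      rw [e0]
      funext x
      rw [Finset.sum_apply]
      simp only [Pi.mul_apply, mt_apply]
      simp)
  refine (c3.seq c4).mono ?_ ?_
  · generalize 2 ^ Fintype.card K = s
    omega
  · simp only [Fintype.card_prod, Fintype.card_fin, Fintype.card_fun,
        Fintype.card_bool, Finset.sum_const, Finset.card_univ, smul_eq_mul, mul_one]
    omega

lemma dsh_le (k m e q : ℕ) (hk : 0 < k) (hm : 0 < m) (hn : k + m ≤ 2 ^ e)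
    (hq : 2 * (k * 2 ^ k) + 2 ^ 2 ^ k * 2 ^ k + 2 ^ 2 ^ k
        + 2 * (m * 2 ^ m) + 3 * ((k + m) * 2 ^ m) + (k + m) ≤ q) :
    Dsh (k + m) q ≤ 2 * (k + m) + 2 ^ k + 2 * e + 2 := by
  refine csSup_le' ?_
  rintro d ⟨f, -, rfl⟩
  have : Nonempty (Fin k) := ⟨⟨0, hk⟩⟩
  have : Nonempty (Fin m) := ⟨⟨0, hm⟩⟩
  have h := comp_main (X := Fin (k + m) → Bool) (K := Fin k) (M := Fin m) (k + m) e
    (fun v x => x (Fin.castAdd m v)) (fun v x => x (Fin.natAdd k v))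
    (by simp; omega) (by simp; omega) hn (fun a b => f (Fin.append a b))
  simp only [Fintype.card_fin] at h
  obtain ⟨G, hG⟩ := h.mono (e := 2 * (k + m) + 2 ^ k + 2 * e + 2) (by omega) hq
  refine dmin_le f G ?_
  rw [Fin.sum_univ_add]
  convert hG using 7 with i x
  rename_i x
  funext j
  refine Fin.addCases (fun v => ?_) (fun v => ?_) j <;> simp

end Main
end Rev
namespace Rev

lemma dsh_bound (n : ℕ) (p : ℝ) (hp : 32 ≤ p) (hpn : p < n) :
    (Dsh n ⌈p * 2 ^ n⌉₊ : ℝ) ≤ 2 * n + 16 * (n / p) + 2 * Real.logb 2 n + 4 := by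
  have hp0 : 0 < p := by linarith
  have hn0 : (0 : ℝ) < n := by linarith
  have hx : 1 ≤ 8 * (n : ℝ) / p := by
    rw [le_div_iff₀ hp0]; linarith
  obtain ⟨k0, h1, h2⟩ := exists_nat_pow_near hx (by norm_num : (1 : ℝ) < 2)
  obtain ⟨k, hk⟩ : ∃ k, k = k0 + 1 := ⟨_, rfl⟩
  have hs1 : 8 * (n : ℝ) < 2 ^ k * p := by
    rw [← hk, div_lt_iff₀ hp0] at h2; exact h2
  have hs2 : (2 : ℝ) ^ k ≤ 16 * (n / p) := by
    rw [hk, pow_succ]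
    calc (2 : ℝ) ^ k0 * 2 ≤ (8 * n / p) * 2 := by linarith
      _ = 16 * (n / p) := by ring
  have hs3 : 2 * (2 : ℝ) ^ k ≤ n := by
    have : (n : ℝ) / p ≤ n / 32 := by gcongr
    linarith
  have hs4 : 2 * 2 ^ k ≤ n := by exact_mod_cast hs3
  have hkk : k < 2 ^ k := Nat.lt_two_pow_self
  obtain ⟨m, rfl⟩ : ∃ m, n = k + m := ⟨n - k, by omega⟩
  have hm : 0 < m := by omega
  have hn0' : k + m ≠ 0 := by omega
  set e := Nat.log 2 (k + m) + 1 with he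
  have hlog : (Nat.log 2 (k + m) : ℝ) ≤ Real.logb 2 ((k + m : ℕ) : ℝ) := by
    exact_mod_cast Real.natLog_le_logb (k + m) 2
  have hle : k + m ≤ 2 ^ e := (Nat.lt_pow_succ_log_self (by norm_num) _).le
  have hsmall : 2 * (k * 2 ^ k) + 2 ^ 2 ^ k * 2 ^ k + 2 ^ 2 ^ k ≤ 4 * 2 ^ (k + m) := by
    have hs5 : 2 ^ k < 2 ^ 2 ^ k := Nat.lt_two_pow_self
    have hs6 : 2 ^ 2 ^ k * 2 ^ 2 ^ k ≤ 2 ^ (k + m) := by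
      rw [← pow_add]; exact Nat.pow_le_pow_right (by norm_num) (by omega)
    have hs7 : 1 ≤ 2 ^ k := Nat.one_le_two_pow
    generalize 2 ^ 2 ^ k = u at *
    generalize 2 ^ k = s at *
    nlinarith
  have hq : 2 * (k * 2 ^ k) + 2 ^ 2 ^ k * 2 ^ k + 2 ^ 2 ^ k
        + 2 * (m * 2 ^ m) + 3 * ((k + m) * 2 ^ m) + (k + m) ≤ ⌈p * 2 ^ (k + m)⌉₊ := by
    have h3 : 2 * (k * 2 ^ k) + 2 ^ 2 ^ k * 2 ^ k + 2 ^ 2 ^ k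
        + 2 * (m * 2 ^ m) + 3 * ((k + m) * 2 ^ m) + (k + m) ≤
        5 * ((k + m) * 2 ^ m) + 5 * 2 ^ (k + m) := by
      have : k + m < 2 ^ (k + m) := Nat.lt_two_pow_self
      have : m * 2 ^ m ≤ (k + m) * 2 ^ m := Nat.mul_le_mul_right _ (by omega)
      omega
    refine h3.trans ?_
    have h4 : ((5 * ((k + m) * 2 ^ m) + 5 * 2 ^ (k + m) : ℕ) : ℝ) ≤ p * 2 ^ (k + m) := by
      have h5 : 8 * (((k + m : ℕ) : ℝ) * 2 ^ m) ≤ p * 2 ^ (k + m) := by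
        rw [pow_add]
        have : (0 : ℝ) < 2 ^ m := by positivity
        nlinarith
      have h6 : 32 * (2 : ℝ) ^ (k + m) ≤ p * 2 ^ (k + m) := by gcongr
      have h7 : (0 : ℝ) < 2 ^ (k + m) := by positivity
      push_cast at h5 ⊢
      linarith
    exact_mod_cast h4.trans (Nat.le_ceil _)
  have hD := dsh_le k m e _ (by omega) hm hle hq
  have hD' : (Dsh (k + m) ⌈p * 2 ^ (k + m)⌉₊ : ℝ) ≤
      ((2 * (k + m) + 2 ^ k + 2 * e + 2 : ℕ) : ℝ) := by exact_mod_cast hD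
  refine hD'.trans ?_
  rw [he]
  push_cast at hlog hs2 ⊢
  linarith

/-- For every growing function `φ` with `φ(n) < n` for all `n`, there is a sequence
`q₂(n) ~ φ(n) · 2ⁿ` such that `D(n, q₂(n)) ≲ 2n`. -/
theorem depth_upper_with_memory_2n (φ : ℕ → ℝ) (hφ : Growing φ)
    (hφn : ∀ n, φ n < (n : ℝ)) :
    ∃ q₂ : ℕ → ℕ,
      AsympEquiv (fun n => (q₂ n : ℝ)) (fun n => φ n * (2 : ℝ) ^ n) ∧
      AsympLE (fun n => (Dsh n (q₂ n) : ℝ)) (fun n => 2 * (n : ℝ)) := by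
  refine ⟨fun n => ⌈φ n * 2 ^ n⌉₊, ?_, ?_⟩
  · have h2 : Tendsto (fun n : ℕ => (2 : ℝ) ^ n) atTop atTop :=
      tendsto_pow_atTop_atTop_of_one_lt (by norm_num)
    exact (tendsto_nat_ceil_div_atTop (R := ℝ)).comp (hφ.2.atTop_mul_atTop₀ h2)
  · have hN : Tendsto (fun n : ℕ => (n : ℝ)) atTop atTop := tendsto_natCast_atTop_atTop
    have hinv : Tendsto (fun n : ℕ => 8 * (φ n)⁻¹) atTop (nhds 0) := by
      simpa using (tendsto_inv_atTop_zero.comp hφ.2).const_mul 8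
    have hlog : Tendsto (fun n : ℕ => (Real.log 2)⁻¹ * (Real.log n / n)) atTop (nhds 0) := by
      have := (Real.isLittleO_log_id_atTop.tendsto_div_nhds_zero).comp hN
      simpa using this.const_mul (Real.log 2)⁻¹
    have hone : Tendsto (fun n : ℕ => 2 * ((n : ℝ))⁻¹) atTop (nhds 0) := by
      simpa using (tendsto_inv_atTop_zero.comp hN).const_mul 2
    have hlim : Tendsto (fun n : ℕ => 1 + 8 * (φ n)⁻¹ + (Real.log 2)⁻¹ * (Real.log n / n)
        + 2 * ((n : ℝ))⁻¹) atTop (nhds 1) := by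
      simpa using ((hinv.const_add 1).add hlog).add hone
    unfold AsympLE
    rw [← hlim.limsup_eq]
    refine limsup_le_limsup ?_ ?_ hlim.isBoundedUnder_le
    · filter_upwards [hφ.2.eventually_ge_atTop 32] with n hn
      have hb := dsh_bound n (φ n) hn (hφn n)
      have hn0 : (0 : ℝ) < n := by linarith [hφn n]
      have hp0 : 0 < φ n := by linarith
      rw [div_le_iff₀ (by positivity)]
      refine hb.trans (le_of_eq ?_)
      rw [Real.logb]
      field_simp
      ring
    · refine IsBoundedUnder.isCoboundedUnder_le ⟨0, ?_⟩
      rw [eventually_map]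
      filter_upwards with n
      positivity

end Rev
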